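/- Let m, n ≥ 1, let b : Fin m → ZMod 2 and k : Fin m → ℕ with k i ≤ n for all i. The weight enumerator of the stabilizer coset M(b,k) + S of the n×m concatenated bit- and phase-flip repetition code equals F^e_m(u, w) for all real x, y, where u i = h^{b i}_{k i, n}(x,y) and w i = h^{b i}_{n − k i, n}(x,y). -/

import Mathlib

/-!
The weight monomial `x ^ (mn - wt v) * y ^ wt v` is the product over qubits of a local factor, `x`
at an identity and `y` elsewhere (`monomial_eq_prod`). The coset `M(b,k) + S` is parametrised
injectively by pairs `(a, ζ)`: the X-parts `a i` range over vectors of parity `b i`, the block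
Z-values `ζ` over vectors of parity zero (`coset_eq_image`). For fixed `ζ` the sum over `a`
therefore factors over the blocks.

Both the sum inside a block and the outer sum over `ζ` are sums of product functions over binary
vectors of prescribed parity. Detecting the parity with the sign character of `ZMod 2` gives
`(∏ (F i 0 + F i 1) ± ∏ (F i 0 - F i 1)) / 2` (`sum_parity_prod`). Inside a block, a position with
Z-part `0` contributes `x + y` and `x - y` to the two products, and a position with Z-part `1`
contributes `2 * y` and `0`; this is `h^b_{K,n}` where `K` counts the positions with Z-part `1`
(`block_sum`). In block `i` one has `K = k i` when `ζ i = 0` and `K = n - k i` when `ζ i = 1`.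
-/

/-- The weight of a Pauli string on qubits indexed by `Fin m × Fin n`. -/
def wt2 {m n : ℕ} (v : Fin m × Fin n → ZMod 2 × ZMod 2) : ℕ :=
  (Finset.univ.filter fun p => v p ≠ (0, 0)).card

/-- The weight enumerator of a finite set of Pauli strings on `Fin m × Fin n`. -/
noncomputable def enum2 {m n : ℕ} (T : Finset (Fin m × Fin n → ZMod 2 × ZMod 2))
    (x y : ℝ) : ℝ :=
  ∑ v ∈ T, x ^ (m * n - wt2 v) * y ^ wt2 v

/-- The stabilizer group of the `n × m` concatenated bit- and phase-flip repetition code: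
even X-weight in each block, Z-part constant within each block, and the block Z-values
sum to zero. -/
def concatStab (m n : ℕ) : Finset (Fin m × Fin n → ZMod 2 × ZMod 2) :=
  Finset.univ.filter fun v =>
    (∀ i, ∑ j, (v (i, j)).1 = 0) ∧
    ∃ ζ : Fin m → ZMod 2, (∀ i j, (v (i, j)).2 = ζ i) ∧ ∑ i, ζ i = 0

/-- `M(b,k)`: block `i` has X-part `b i` at position 0 (and 0 elsewhere) and Z-part 1 at
positions `j < k i` (and 0 elsewhere). -/
def Mbk (m n : ℕ) (b : Fin m → ZMod 2) (k : Fin m → ℕ) :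
    Fin m × Fin n → ZMod 2 × ZMod 2 :=
  fun p => (if (p.2 : ℕ) = 0 then b p.1 else 0, if (p.2 : ℕ) < k p.1 then 1 else 0)

/-- The logical-Z representative: Z-part 1 at every position of block 0. -/
def ZbarC (m n : ℕ) : Fin m × Fin n → ZMod 2 × ZMod 2 :=
  fun p => (0, if (p.1 : ℕ) = 0 then 1 else 0)

/-- The logical-X representative: X-part 1 at position 0 of every block. -/
def XbarC (m n : ℕ) : Fin m × Fin n → ZMod 2 × ZMod 2 :=
  fun p => (if (p.2 : ℕ) = 0 then 1 else 0, 0)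

/-- The logical-Y representative. -/
def YbarC (m n : ℕ) : Fin m × Fin n → ZMod 2 × ZMod 2 :=
  XbarC m n + ZbarC m n

noncomputable def fe (n : ℕ) (x y : ℝ) : ℝ := ((x + y) ^ n + (x - y) ^ n) / 2

noncomputable def fo (n : ℕ) (x y : ℝ) : ℝ := ((x + y) ^ n - (x - y) ^ n) / 2

noncomputable def g (k n : ℕ) (x y : ℝ) : ℝ := (1 / 2) * (x + y) ^ (n - k) * (2 * y) ^ k

/-- `h^b_{k,n}`. -/
noncomputable def hpol (b : ZMod 2) (k n : ℕ) (x y : ℝ) : ℝ :=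
  if k = 0 then (if b = 0 then fe n x y else fo n x y) else g k n x y

noncomputable def Fe (m : ℕ) (u w : Fin m → ℝ) : ℝ :=
  ((∏ i, (u i + w i)) + ∏ i, (u i - w i)) / 2

noncomputable def Fo (m : ℕ) (u w : Fin m → ℝ) : ℝ :=
  ((∏ i, (u i + w i)) - ∏ i, (u i - w i)) / 2

open Finset

lemma zmod_two_cases (c : ZMod 2) : c = 0 ∨ c = 1 := by
  revert c
  decide

/-- The nontrivial sign character of `ZMod 2`, with real values. -/
def parSign (c : ZMod 2) : ℝ := if c = 0 then 1 else -1

lemma parSign_add (c d : ZMod 2) : parSign (c + d) = parSign c * parSign d := by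
  have h : (1 : ZMod 2) + 1 = 0 := rfl
  rcases zmod_two_cases c with rfl | rfl <;> rcases zmod_two_cases d with rfl | rfl <;>
    simp [parSign, h]

lemma parSign_sum {ι : Type*} (s : Finset ι) (a : ι → ZMod 2) :
    parSign (∑ i ∈ s, a i) = ∏ i ∈ s, parSign (a i) := by
  classical
  induction s using Finset.induction_on with
  | empty => simp [parSign]
  | insert i s hi ih => rw [sum_insert hi, prod_insert hi, parSign_add, ih]

lemma indicator_eq_parSign (c d : ZMod 2) :
    (if d = c then (1 : ℝ) else 0) = (1 + parSign c * parSign d) / 2 := by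
  rcases zmod_two_cases c with rfl | rfl <;> rcases zmod_two_cases d with rfl | rfl <;>
    simp [parSign]

lemma sum_zmod_two (f : ZMod 2 → ℝ) : ∑ c, f c = f 0 + f 1 := Fin.sum_univ_two f

/-- Summing a product function over the binary vectors of parity `c`: the parity constraint is
expanded in characters, and each resulting unconstrained sum factors. -/
lemma sum_parity_prod {ι : Type*} [Fintype ι] [DecidableEq ι] (F : ι → ZMod 2 → ℝ) (c : ZMod 2) :
    ∑ a ∈ univ.filter (fun a : ι → ZMod 2 => ∑ i, a i = c), ∏ i, F i (a i)
      = ((∏ i, (F i 0 + F i 1)) + parSign c * ∏ i, (F i 0 - F i 1)) / 2 := by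
  have h1 : ∏ i, (F i 0 + F i 1) = ∑ a : ι → ZMod 2, ∏ i, F i (a i) := by
    rw [← Fintype.prod_sum]
    simp only [sum_zmod_two]
  have h2 : ∏ i, (F i 0 - F i 1) = ∑ a : ι → ZMod 2, ∏ i, (parSign (a i) * F i (a i)) := by
    rw [← Fintype.prod_sum (fun i c => parSign c * F i c)]
    simp only [sum_zmod_two]
    simp [parSign, sub_eq_add_neg]
  rw [h1, h2, sum_filter, mul_sum, ← sum_add_distrib, sum_div]
  refine sum_congr rfl fun a _ => ?_
  rw [prod_mul_distrib, ← parSign_sum]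
  have := indicator_eq_parSign c (∑ i, a i)
  calc _ = (if ∑ i, a i = c then (1 : ℝ) else 0) * ∏ i, F i (a i) := by split_ifs <;> simp
    _ = _ := by rw [this]; ring

/-- The contribution of a single-qubit Pauli to the weight monomial. -/
noncomputable def qubitFactor (x y : ℝ) (p : ZMod 2 × ZMod 2) : ℝ := if p = (0, 0) then x else y

lemma monomial_eq_prod {m n : ℕ} (v : Fin m × Fin n → ZMod 2 × ZMod 2) (x y : ℝ) :
    x ^ (m * n - wt2 v) * y ^ wt2 v = ∏ i, ∏ j, qubitFactor x y (v (i, j)) := by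
  rw [← Fintype.prod_prod_type (fun p => qubitFactor x y (v p))]
  unfold qubitFactor
  rw [prod_ite, prod_const, prod_const]
  congr 2
  have h := card_filter_add_card_filter_not (s := (univ : Finset (Fin m × Fin n)))
    (fun p => v p = (0, 0))
  simp only [card_univ, Fintype.card_prod, Fintype.card_fin] at h
  unfold wt2
  simp only [ne_eq]
  omega

/-- `h^b_{K,n}` is the weight enumerator of one block: X-part of parity `b`, and a fixed Z-part `z`
having `K` ones. -/
lemma block_sum (n : ℕ) (b : ZMod 2) (z : Fin n → ZMod 2) (x y : ℝ) :
    ∑ a ∈ univ.filter (fun a : Fin n → ZMod 2 => ∑ j, a j = b), ∏ j, qubitFactor x y (a j, z j)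
      = hpol b (univ.filter fun j => z j ≠ 0).card n x y := by
  rw [sum_parity_prod (fun j c => qubitFactor x y (c, z j)) b]
  have hc := card_filter_add_card_filter_not (s := (univ : Finset (Fin n))) (fun j => z j = 0)
  simp only [card_univ, Fintype.card_fin] at hc
  have e1 : ∀ j, qubitFactor x y (0, z j) + qubitFactor x y (1, z j)
      = if z j = 0 then x + y else 2 * y := by
    intro j
    by_cases h : z j = 0 <;> simp [qubitFactor, h, two_mul]
  have e2 : ∀ j, qubitFactor x y (0, z j) - qubitFactor x y (1, z j)
      = if z j = 0 then x - y else 0 := by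
    intro j
    by_cases h : z j = 0 <;> simp [qubitFactor, h]
  simp only [e1, e2, prod_ite, prod_const, ne_eq]
  generalize (univ.filter fun j => ¬ z j = 0).card = K at *
  have hK : (univ.filter fun j => z j = 0).card = n - K := by omega
  rw [hK]
  unfold hpol fe fo g parSign
  by_cases h0 : K = 0
  · subst h0
    by_cases hb : b = 0 <;> simp [hb, sub_eq_add_neg]
  · simp [h0]
    ring

/-- The Z-part of `M(b,k)` in a block with `k i = K`, shifted by the block Z-value `c`. -/
def zPart (n K : ℕ) (c : ZMod 2) (j : Fin n) : ZMod 2 := (if (j : ℕ) < K then 1 else 0) + c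

lemma card_zPart_zero {n K : ℕ} (hK : K ≤ n) :
    (univ.filter fun j : Fin n => zPart n K 0 j ≠ 0).card = K := by
  simp [zPart, Fin.card_filter_val_lt, hK]

lemma card_zPart_one {n K : ℕ} (hK : K ≤ n) :
    (univ.filter fun j : Fin n => zPart n K 1 j ≠ 0).card = n - K := by
  have h : (1 : ZMod 2) + 1 = 0 := rfl
  have e : (univ.filter fun j : Fin n => zPart n K 1 j ≠ 0)
      = univ.filter fun j : Fin n => ¬ (j : ℕ) < K := by
    refine filter_congr fun j _ => ?_
    by_cases hj : (j : ℕ) < K <;> simp [zPart, hj, h]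
  have hc := card_filter_add_card_filter_not (s := (univ : Finset (Fin n))) (fun j => (j : ℕ) < K)
  rw [e]
  simp only [card_univ, Fintype.card_fin, Fin.card_filter_val_lt] at hc
  omega

/-- The element of `M(b,k) + S` with block Z-values `q.1` and X-parts `q.2`. -/
def cosetElt (m n : ℕ) (k : Fin m → ℕ) (q : (Fin m → ZMod 2) × (Fin m → Fin n → ZMod 2)) :
    Fin m × Fin n → ZMod 2 × ZMod 2 :=
  fun p => (q.2 p.1 p.2, zPart n (k p.1) (q.1 p.1) p.2)

lemma cosetElt_injective {m n : ℕ} (hn : 1 ≤ n) (k : Fin m → ℕ) :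
    Function.Injective (cosetElt m n k) := by
  rintro ⟨ζ, a⟩ ⟨ζ', a'⟩ h
  have h' := fun i j => congrFun h (i, j)
  simp only [cosetElt, zPart, Prod.mk.injEq, add_right_inj] at h'
  refine Prod.ext (funext fun i => ?_) (funext fun i => funext fun j => (h' i j).1)
  exact (h' i ⟨0, hn⟩).2

lemma sum_ite_val_zero {n : ℕ} (hn : 1 ≤ n) (c : ZMod 2) :
    ∑ j : Fin n, (if (j : ℕ) = 0 then c else 0) = c := by
  rw [sum_eq_single (⟨0, hn⟩ : Fin n)]
  · simp
  · intro j _ hj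
    rw [if_neg]
    exact fun h => hj (Fin.ext h)
  · simp

lemma coset_eq_image {m n : ℕ} (hn : 1 ≤ n) (b : Fin m → ZMod 2) (k : Fin m → ℕ) :
    ((concatStab m n).image fun s => Mbk m n b k + s)
      = ((univ.filter fun ζ : Fin m → ZMod 2 => ∑ i, ζ i = 0) ×ˢ
          Fintype.piFinset fun i => univ.filter fun a : Fin n → ZMod 2 => ∑ j, a j = b i).image
        (cosetElt m n k) := by
  ext v
  simp only [mem_image, concatStab, mem_filter, mem_univ, true_and, mem_product,
    Fintype.mem_piFinset]
  constructor
  · rintro ⟨s, ⟨hX, ζ, hζ, h0⟩, rfl⟩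
    refine ⟨(ζ, fun i j => (if (j : ℕ) = 0 then b i else 0) + (s (i, j)).1), ⟨h0, fun i => ?_⟩, ?_⟩
    · rw [sum_add_distrib, sum_ite_val_zero hn, hX, add_zero]
    · funext p
      simp [cosetElt, Mbk, zPart, Prod.ext_iff, ← hζ p.1 p.2]
  · rintro ⟨⟨ζ, a⟩, ⟨h0, ha⟩, rfl⟩
    refine ⟨fun p => (a p.1 p.2 - (if (p.2 : ℕ) = 0 then b p.1 else 0), ζ p.1),
      ⟨fun i => ?_, ζ, fun _ _ => rfl, h0⟩, ?_⟩
    · simp only [sum_sub_distrib]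
      rw [sum_ite_val_zero hn, ha, sub_self]
    · funext p
      simp [cosetElt, Mbk, zPart]

theorem weight_enumerator_concat_coset (m n : ℕ) (hm : 1 ≤ m) (hn : 1 ≤ n)
    (b : Fin m → ZMod 2) (k : Fin m → ℕ) (hk : ∀ i, k i ≤ n) (x y : ℝ) :
    enum2 ((concatStab m n).image fun s => Mbk m n b k + s) x y
      = Fe m (fun i => hpol (b i) (k i) n x y) (fun i => hpol (b i) (n - k i) n x y) := by
  unfold enum2
  rw [coset_eq_image hn, sum_image (fun _ _ _ _ h => cosetElt_injective hn k h), sum_product]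
  simp only [monomial_eq_prod, cosetElt]
  -- for fixed block Z-values, the sum over the X-parts factors over the blocks
  have key : ∀ ζ : Fin m → ZMod 2,
      ∑ a ∈ Fintype.piFinset fun i => univ.filter fun a : Fin n → ZMod 2 => ∑ j, a j = b i,
        ∏ i, ∏ j, qubitFactor x y (a i j, zPart n (k i) (ζ i) j)
      = ∏ i, hpol (b i) (univ.filter fun j => zPart n (k i) (ζ i) j ≠ 0).card n x y := by
    intro ζ
    rw [← prod_univ_sum _ (fun i (a : Fin n → ZMod 2) =>
      ∏ j, qubitFactor x y (a j, zPart n (k i) (ζ i) j))]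
    exact prod_congr rfl fun i _ => block_sum n (b i) _ x y
  simp only [key]
  rw [sum_parity_prod
    (fun i c => hpol (b i) (univ.filter fun j => zPart n (k i) c j ≠ 0).card n x y) 0]
  simp only [card_zPart_zero (hk _), card_zPart_one (hk _)]
  simp [Fe, parSign]
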